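/- arXiv:math/0702563 — 3 statements merged into one kernel-verified Lean document; each statement's English description precedes it below -/
import Mathlib

section
/- Let A = (A₁, A₂) be a commuting 2-contraction on H and (z₁,z₂) ∈ 𝔻². Then for all x, y ∈ H: θ_A(z₁,z₂)(D_A(x,y)) = D_{A*}((1_H − z₁A₁* − z₂A₂*)⁻¹((z₁x + z₂y) − (A₁x + A₂y))). -/
/-!
The key fact is that positive operators `P`, `Q` whose squares are intertwined by `A` are
themselves intertwined by `A`. As `(1 - A A†) A = A (1 - A† A)`, this gives `D_{A†} A = A D_A`, so
`θ_A D_A = -A D_A + D_{A†} R Z (1 - A† A) = D_{A†} (-A + R Z - R Z A† A)`,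
where `R = (1 - Z A†)⁻¹`, and `R Z A† = R - 1` turns the last bracket into `R (Z - A)`.
-/

open ContinuousLinearMap Filter

section Intertwining

variable {E F : Type*}
  [NormedAddCommGroup E] [InnerProductSpace ℂ E] [CompleteSpace E]
  [NormedAddCommGroup F] [InnerProductSpace ℂ F] [CompleteSpace F]

theorem comp_eq_zero_of_comp_eq_neg_comp {P : F →L[ℂ] F} {Q : E →L[ℂ] E} {T : E →L[ℂ] F}
    (hP : 0 ≤ P) (hQ : 0 ≤ Q) (h : P ∘L T = -(T ∘L Q)) : T ∘L Q = 0 := by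
  have hS : 0 ≤ adjoint T ∘L T := (nonneg_iff_isPositive _).2 (isPositive_adjoint_comp_self T)
  have hPT : 0 ≤ adjoint T ∘L P ∘L T :=
    (nonneg_iff_isPositive _).2 (((nonneg_iff_isPositive P).1 hP).adjoint_conj T)
  have hSQ : (adjoint T ∘L T) * Q = -(adjoint T ∘L P ∘L T) := by
    rw [h, comp_neg, neg_neg, mul_def, comp_assoc]
  -- Being self-adjoint, this product of positive operators is a commuting one, hence positive;
  -- the right-hand side is negative.
  have hcomm : Commute (adjoint T ∘L T) Q := by
    rw [(IsSelfAdjoint.of_nonneg hS).commute_iff (.of_nonneg hQ), hSQ]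
    exact (IsSelfAdjoint.of_nonneg hPT).neg
  have hSQ_zero : (adjoint T ∘L T) * Q = 0 :=
    le_antisymm (hSQ ▸ neg_nonpos.2 hPT) (hcomm.mul_nonneg hS hQ)
  rw [← adjoint_comp_self_eq_zero_iff, adjoint_comp, comp_assoc, ← comp_assoc _ T Q,
    ← mul_def (adjoint T ∘L T), hSQ_zero, comp_zero]

theorem comp_eq_comp_of_sq_comp_eq_comp_sq {P : F →L[ℂ] F} {Q : E →L[ℂ] E} {A : E →L[ℂ] F}
    (hP : 0 ≤ P) (hQ : 0 ≤ Q) (h : (P * P) ∘L A = A ∘L (Q * Q)) : P ∘L A = A ∘L Q := by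
  obtain ⟨T, hT⟩ : ∃ T, T = P ∘L A - A ∘L Q := ⟨_, rfl⟩
  have hPT : P ∘L T = -(T ∘L Q) := by
    rw [hT, comp_sub, sub_comp, neg_sub, ← comp_assoc, ← mul_def, h, mul_def]
    simp only [comp_assoc]
  have hTQ : T ∘L Q = 0 := comp_eq_zero_of_comp_eq_neg_comp hP hQ hPT
  have hPT_zero : P ∘L T = 0 := by rw [hPT, hTQ, neg_zero]
  have hadj : adjoint T = adjoint A ∘L P - Q ∘L adjoint A := by
    rw [hT, map_sub, adjoint_comp, adjoint_comp, (IsSelfAdjoint.of_nonneg hP).adjoint_eq,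
      (IsSelfAdjoint.of_nonneg hQ).adjoint_eq]
  have hTT : adjoint T ∘L T = -(Q ∘L adjoint A ∘L T) := by
    nth_rw 1 [hadj]
    rw [sub_comp, comp_assoc, hPT_zero, comp_zero, zero_sub, comp_assoc]
  have hTTT : T ∘L adjoint T ∘L T = 0 := by
    rw [hTT, comp_neg, ← comp_assoc, hTQ, zero_comp, neg_zero]
  have hTT_zero : adjoint T ∘L T = 0 := by
    rw [← adjoint_comp_self_eq_zero_iff, adjoint_comp, adjoint_adjoint, comp_assoc, hTTT, comp_zero]
  rw [← sub_eq_zero, ← hT]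
  exact adjoint_comp_self_eq_zero_iff.1 hTT_zero

/-- `D` is the defect operator `D_A = (1 - A† A)^{1/2}` of `A`. The square root is characterised
as the positive operator with the right square instead of being chosen by functional calculus. -/
structure IsDefectOperator (A : E →L[ℂ] F) (D : E →L[ℂ] E) : Prop where
  nonneg : 0 ≤ D
  mul_self : D * D = 1 - adjoint A ∘L A

theorem IsDefectOperator.comp_eq_comp {A : E →L[ℂ] F} {Dstar : F →L[ℂ] F} {D : E →L[ℂ] E}
    (hDstar : IsDefectOperator (adjoint A) Dstar) (hD : IsDefectOperator A D) :
    Dstar ∘L A = A ∘L D := by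
  refine comp_eq_comp_of_sq_comp_eq_comp_sq hDstar.nonneg hD.nonneg ?_
  rw [hDstar.mul_self, hD.mul_self, adjoint_adjoint, sub_comp, comp_sub, comp_assoc, one_def,
    one_def, id_comp, comp_id]

/-- `-A + Dstar ∘L R ∘L Z ∘L D` is the characteristic function of `A`; in the case of a row
operator `A`, the point `z` of the ball enters through the operator `Z`. -/
theorem theta_apply_DA_general {A Z : E →L[ℂ] F} {Dstar R : F →L[ℂ] F} {D : E →L[ℂ] E}
    (hDstar : IsDefectOperator (adjoint A) Dstar) (hD : IsDefectOperator A D)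
    (hR : R * (1 - Z ∘L adjoint A) = 1) :
    (-A + Dstar ∘L R ∘L Z ∘L D) ∘L D = Dstar ∘L R ∘L (Z - A) := by
  have hRZ : R ∘L Z ∘L adjoint A = R - 1 := by
    rw [mul_sub, mul_one, mul_def] at hR
    rw [← hR, sub_sub_cancel]
  calc (-A + Dstar ∘L R ∘L Z ∘L D) ∘L D
      = -(A ∘L D) + Dstar ∘L R ∘L Z ∘L (D * D) := by
        simp only [add_comp, neg_comp, comp_assoc, mul_def]
    _ = Dstar ∘L (-A + (R ∘L Z - (R ∘L Z ∘L adjoint A) ∘L A)) := by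
        rw [← hDstar.comp_eq_comp hD, hD.mul_self]
        simp only [comp_add, comp_sub, comp_neg, comp_assoc, one_def, comp_id]
    _ = Dstar ∘L R ∘L (Z - A) := by
        rw [hRZ, sub_comp, one_def, id_comp, comp_sub R]
        congr 1
        abel

end Intertwining

section RowOperator

variable {𝕜 E₁ E₂ F G : Type*} [RCLike 𝕜]
  [NormedAddCommGroup E₁] [InnerProductSpace 𝕜 E₁]
  [NormedAddCommGroup E₂] [InnerProductSpace 𝕜 E₂]
  [NormedAddCommGroup F] [InnerProductSpace 𝕜 F]
  [NormedAddCommGroup G] [InnerProductSpace 𝕜 G]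

/-- The row operator `(T₁, T₂)` on the Hilbert direct sum `E₁ ⊕ E₂`, which is encoded as
`WithLp 2 (E₁ × E₂)` since `E₁ × E₂` carries the sup norm. -/
noncomputable def rowOperator (T₁ : E₁ →L[𝕜] F) (T₂ : E₂ →L[𝕜] F) : WithLp 2 (E₁ × E₂) →L[𝕜] F :=
  T₁.coprod T₂ ∘L (WithLp.prodContinuousLinearEquiv 2 𝕜 E₁ E₂ : _ →L[𝕜] E₁ × E₂)

@[simp]
theorem rowOperator_toLp (T₁ : E₁ →L[𝕜] F) (T₂ : E₂ →L[𝕜] F) (x : E₁ × E₂) :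
    rowOperator T₁ T₂ (WithLp.toLp 2 x) = T₁ x.1 + T₂ x.2 :=
  rfl

theorem eq_rowOperator_iff {T : WithLp 2 (E₁ × E₂) →L[𝕜] F} {T₁ : E₁ →L[𝕜] F} {T₂ : E₂ →L[𝕜] F} :
    T = rowOperator T₁ T₂ ↔ ∀ x y, T (WithLp.toLp 2 (x, y)) = T₁ x + T₂ y :=
  ⟨fun h x y => h ▸ rowOperator_toLp T₁ T₂ (x, y),
    fun h => ContinuousLinearMap.ext fun v => h v.fst v.snd⟩

variable [CompleteSpace E₁] [CompleteSpace E₂] [CompleteSpace F]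

theorem adjoint_rowOperator_apply (T₁ : E₁ →L[𝕜] F) (T₂ : E₂ →L[𝕜] F) (h : F) :
    adjoint (rowOperator T₁ T₂) h = WithLp.toLp 2 (adjoint T₁ h, adjoint T₂ h) := by
  refine ext_inner_right 𝕜 fun v => ?_
  obtain ⟨x, rfl⟩ := WithLp.toLp_surjective 2 v
  simp only [adjoint_inner_left, rowOperator_toLp, inner_add_right, WithLp.prod_inner_apply]

theorem rowOperator_comp_adjoint_rowOperator (S₁ : E₁ →L[𝕜] G) (S₂ : E₂ →L[𝕜] G)
    (T₁ : E₁ →L[𝕜] F) (T₂ : E₂ →L[𝕜] F) :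
    rowOperator S₁ S₂ ∘L adjoint (rowOperator T₁ T₂) = S₁ ∘L adjoint T₁ + S₂ ∘L adjoint T₂ := by
  ext h
  simp only [comp_apply, add_apply, adjoint_rowOperator_apply, rowOperator_toLp]

end RowOperator

theorem theta_apply_DA
    {H : Type*} [NormedAddCommGroup H] [InnerProductSpace ℂ H] [CompleteSpace H]
    (A₁ A₂ : H →L[ℂ] H)
    (hcomm : A₁ * A₂ = A₂ * A₁)
    (hcontr : A₁ * adjoint A₁ + A₂ * adjoint A₂ ≤ 1)
    (Dstar : H →L[ℂ] H) (hDstar_pos : 0 ≤ Dstar)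
    (hDstar_sq : Dstar * Dstar = 1 - A₁ * adjoint A₁ - A₂ * adjoint A₂)
    (Arow : WithLp 2 (H × H) →L[ℂ] H)
    (hArow : ∀ x y : H, Arow ((WithLp.equiv 2 (H × H)).symm (x, y)) = A₁ x + A₂ y)
    (DA : WithLp 2 (H × H) →L[ℂ] WithLp 2 (H × H)) (hDA_pos : 0 ≤ DA)
    (hDA_sq : DA * DA = 1 - (adjoint Arow) ∘L Arow)
    (z₁ z₂ : ℂ) (hz : ‖z₁‖ ^ 2 + ‖z₂‖ ^ 2 < 1)
    (R : H →L[ℂ] H) (hR₁ : R * (1 - z₁ • adjoint A₁ - z₂ • adjoint A₂) = 1)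
    (hR₂ : (1 - z₁ • adjoint A₁ - z₂ • adjoint A₂) * R = 1)
    (Zrow : WithLp 2 (H × H) →L[ℂ] H)
    (hZrow : ∀ x y : H, Zrow ((WithLp.equiv 2 (H × H)).symm (x, y)) = z₁ • x + z₂ • y) :
    ∀ x y : H,
      (-Arow + Dstar ∘L R ∘L Zrow ∘L DA) (DA ((WithLp.equiv 2 (H × H)).symm (x, y))) =
        Dstar (R ((z₁ • x + z₂ • y) - (A₁ x + A₂ y))) := by
  obtain rfl : Arow = rowOperator A₁ A₂ := eq_rowOperator_iff.2 hArow
  obtain rfl : Zrow = rowOperator (z₁ • 1) (z₂ • 1) := eq_rowOperator_iff.2 hZrow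
  have hDstar : IsDefectOperator (adjoint (rowOperator A₁ A₂)) Dstar := by
    refine ⟨hDstar_pos, ?_⟩
    rw [hDstar_sq, adjoint_adjoint, rowOperator_comp_adjoint_rowOperator, sub_sub, mul_def, mul_def]
  have hR : R * (1 - rowOperator (z₁ • 1) (z₂ • 1) ∘L adjoint (rowOperator A₁ A₂)) = 1 := by
    rw [rowOperator_comp_adjoint_rowOperator, smul_comp, smul_comp, one_def, id_comp, id_comp,
      ← sub_sub]
    exact hR₁
  intro x y
  exact DFunLike.congr_fun (theta_apply_DA_general hDstar ⟨hDA_pos, hDA_sq⟩ hR)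
    (WithLp.toLp 2 (x, y))
end

section
/- Let A = (A₁, A₂) be a pure commuting 2-contraction on H such that D_{A*} is injective, and let (z₁,z₂) ∈ 𝔻². Then (z₁,z₂) ∈ σ_T^{(1)}(A) if and only if there exists x ≠ 0 in H such that θ_A(z₁,z₂)(D_A(x,0)) = 0 and θ_A(z₁,z₂)(D_A(0,x)) = 0. -/
/-!
Let `Z` be the row operator of `z` and `R = (1 - Z A*)⁻¹`. The intertwining relation
`A D_A = D_{A*} A` gives `θ_A(z) D_A = D_{A*} (-A + R Z (1 - A* A)) = D_{A*} R (Z - A)`, where the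
last step is the identity `(1 - Z A*) A = A - Z + Z (1 - A* A)`. As `D_{A*}` and `R` are injective,
`θ_A(z) D_A v = 0` holds exactly when `A v = Z v`; for `v = (x, 0)` and `v = (0, x)` these are the
two joint eigenvector equations for `x`.

The intertwining relation holds for the squares, `A D_A² = D_{A*}² A`. Read on the Hilbert sum, it
says that an off-diagonal operator commutes with the square of `D_A ⊕ D_{A*}`, hence also with the
positive square root `D_A ⊕ D_{A*}` itself.
-/

open ContinuousLinearMap Filter

section Intertwining

theorem commute_of_commute_mul_self {𝒜 : Type*} [NonUnitalCStarAlgebra 𝒜]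
    [PartialOrder 𝒜] [StarOrderedRing 𝒜] {s p : 𝒜} (hp : 0 ≤ p) (h : Commute (p * p) s) :
    Commute p s := by
  rw [← CFC.sqrt_mul_self p hp]
  exact h.cfcₙ_nnreal NNReal.sqrt

variable {𝕜 E F : Type*} [RCLike 𝕜] [NormedAddCommGroup E] [InnerProductSpace 𝕜 E]
  [NormedAddCommGroup F] [InnerProductSpace 𝕜 F]

/-- The direct sum `P ⊕ Q` of two operators, acting on the Hilbert sum `E ⊕ F`. -/
noncomputable def directSum (P : E →L[𝕜] E) (Q : F →L[𝕜] F) :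
    WithLp 2 (E × F) →L[𝕜] WithLp 2 (E × F) :=
  (WithLp.prodContinuousLinearEquiv 2 𝕜 E F).symm ∘L P.prodMap Q ∘L
    WithLp.prodContinuousLinearEquiv 2 𝕜 E F

/-- The operator `(x, y) ↦ (0, T x)` on the Hilbert sum `E ⊕ F`. It turns intertwining relations
for `T` into commutation relations in the algebra of operators on `E ⊕ F`. -/
noncomputable def lowerLeft (T : E →L[𝕜] F) : WithLp 2 (E × F) →L[𝕜] WithLp 2 (E × F) :=
  (WithLp.prodContinuousLinearEquiv 2 𝕜 E F).symm ∘L inr 𝕜 E F ∘L T ∘L WithLp.fstL 2 𝕜 E F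

theorem directSum_nonneg {P : E →L[𝕜] E} {Q : F →L[𝕜] F} (hP : 0 ≤ P) (hQ : 0 ≤ Q) :
    0 ≤ directSum P Q := by
  rw [nonneg_iff_isPositive, isPositive_def] at *
  refine ⟨fun v w => congrArg₂ (· + ·) (hP.1 v.fst w.fst) (hQ.1 v.snd w.snd), fun v => ?_⟩
  exact (add_nonneg (hP.2 v.fst) (hQ.2 v.snd)).trans_eq (map_add RCLike.re _ _).symm

theorem directSum_mul_directSum (P P' : E →L[𝕜] E) (Q Q' : F →L[𝕜] F) :
    directSum P Q * directSum P' Q' = directSum (P * P') (Q * Q') :=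
  rfl

theorem commute_directSum_lowerLeft_iff {P : E →L[𝕜] E} {Q : F →L[𝕜] F} {T : E →L[𝕜] F} :
    Commute (directSum P Q) (lowerLeft T) ↔ T ∘L P = Q ∘L T := by
  refine ⟨fun h => ?_, fun h => ?_⟩
  · ext x
    exact congrArg WithLp.snd (DFunLike.congr_fun h (WithLp.toLp 2 (x, 0))).symm
  · ext v : 1
    exact congrArg (WithLp.toLp 2) (Prod.ext (map_zero P) (DFunLike.congr_fun h v.fst).symm)

theorem comp_eq_comp_of_comp_mul_self_eq {H K : Type*}
    [NormedAddCommGroup H] [InnerProductSpace ℂ H] [CompleteSpace H]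
    [NormedAddCommGroup K] [InnerProductSpace ℂ K] [CompleteSpace K]
    {P : K →L[ℂ] K} {Q : H →L[ℂ] H} {T : K →L[ℂ] H} (hP : 0 ≤ P) (hQ : 0 ≤ Q)
    (h : T ∘L (P * P) = (Q * Q) ∘L T) : T ∘L P = Q ∘L T := by
  rw [← commute_directSum_lowerLeft_iff, ← directSum_mul_directSum] at *
  exact commute_of_commute_mul_self (directSum_nonneg hP hQ) h

end Intertwining

section RowOperator

variable {𝕜 E F G G' : Type*} [RCLike 𝕜]
  [NormedAddCommGroup E] [InnerProductSpace 𝕜 E] [CompleteSpace E]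
  [NormedAddCommGroup F] [InnerProductSpace 𝕜 F] [CompleteSpace F]
  [NormedAddCommGroup G] [InnerProductSpace 𝕜 G] [CompleteSpace G]

theorem adjoint_apply_of_row {T : WithLp 2 (E × F) →L[𝕜] G} {A : E →L[𝕜] G} {B : F →L[𝕜] G}
    (hT : ∀ x y, T (WithLp.toLp 2 (x, y)) = A x + B y) (g : G) :
    adjoint T g = WithLp.toLp 2 (adjoint A g, adjoint B g) := by
  refine ext_inner_right 𝕜 fun v => ?_
  have hv : T v = A v.fst + B v.snd := hT v.fst v.snd
  simp [adjoint_inner_left, hv, inner_add_right]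

theorem comp_adjoint_of_row [AddCommGroup G'] [Module 𝕜 G'] [TopologicalSpace G']
    [IsTopologicalAddGroup G']
    {S : WithLp 2 (E × F) →L[𝕜] G'} {T : WithLp 2 (E × F) →L[𝕜] G}
    {A : E →L[𝕜] G} {B : F →L[𝕜] G} {C : E →L[𝕜] G'} {D : F →L[𝕜] G'}
    (hS : ∀ x y, S (WithLp.toLp 2 (x, y)) = C x + D y)
    (hT : ∀ x y, T (WithLp.toLp 2 (x, y)) = A x + B y) :
    S ∘L adjoint T = C ∘L adjoint A + D ∘L adjoint B := by
  ext g
  simp [adjoint_apply_of_row hT, hS]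

end RowOperator

section CharacteristicFunction

variable {H K : Type*} [NormedAddCommGroup H] [InnerProductSpace ℂ H]
  [NormedAddCommGroup K] [InnerProductSpace ℂ K]

/-- The value `θ_A(z) = -A + D_{A*} (1 - Z A*)⁻¹ Z D_A` of the characteristic function of a row
contraction `A`, where `Z` is the row operator of `z`. The defect operators `D_{A*}`, `D_A` and the
inverse `(1 - Z A*)⁻¹` enter as the arguments `Dstar`, `D` and `R`. -/
noncomputable def characteristicFunction (A Z : K →L[ℂ] H) (Dstar R : H →L[ℂ] H) (D : K →L[ℂ] K) :
    K →L[ℂ] H :=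
  -A + Dstar ∘L R ∘L Z ∘L D

variable [CompleteSpace H] [CompleteSpace K]
  {A Z : K →L[ℂ] H} {Dstar R : H →L[ℂ] H} {D : K →L[ℂ] K}

theorem comp_defect_eq_defect_comp (hDstar : 0 ≤ Dstar) (hD : 0 ≤ D)
    (hDstar_sq : Dstar * Dstar = 1 - A ∘L adjoint A) (hD_sq : D * D = 1 - adjoint A ∘L A) :
    A ∘L D = Dstar ∘L A :=
  comp_eq_comp_of_comp_mul_self_eq hD hDstar (by rw [hDstar_sq, hD_sq]; ext; simp)

theorem characteristicFunction_comp_defect (hDstar : 0 ≤ Dstar) (hD : 0 ≤ D)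
    (hDstar_sq : Dstar * Dstar = 1 - A ∘L adjoint A) (hD_sq : D * D = 1 - adjoint A ∘L A)
    (hR : R * (1 - Z ∘L adjoint A) = 1) :
    characteristicFunction A Z Dstar R D ∘L D = Dstar ∘L R ∘L (Z - A) := by
  have hRA : R ∘L (A - Z ∘L adjoint A ∘L A) = A := congrArg (· ∘L A) hR
  calc
    characteristicFunction A Z Dstar R D ∘L D
        = -(A ∘L D) + Dstar ∘L R ∘L Z ∘L (D * D) := by
      rw [characteristicFunction, add_comp, neg_comp]
      rfl
    _ = -(Dstar ∘L A) + Dstar ∘L R ∘L Z ∘L (1 - adjoint A ∘L A) := by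
      rw [comp_defect_eq_defect_comp hDstar hD hDstar_sq hD_sq, hD_sq]
    _ = Dstar ∘L (-(R ∘L (A - Z ∘L adjoint A ∘L A)) + R ∘L Z ∘L (1 - adjoint A ∘L A)) := by
      rw [hRA, comp_add, comp_neg]
    _ = Dstar ∘L R ∘L (Z - A) := by ext; simp

theorem characteristicFunction_defect_apply_eq_zero_iff (hDstar : 0 ≤ Dstar) (hD : 0 ≤ D)
    (hDstar_sq : Dstar * Dstar = 1 - A ∘L adjoint A) (hD_sq : D * D = 1 - adjoint A ∘L A)
    (hDstar_inj : Function.Injective Dstar)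
    (hR₁ : R * (1 - Z ∘L adjoint A) = 1) (hR₂ : (1 - Z ∘L adjoint A) * R = 1) (v : K) :
    characteristicFunction A Z Dstar R D (D v) = 0 ↔ A v = Z v := by
  have hR_inj : Function.Injective R :=
    Function.LeftInverse.injective (g := ⇑(1 - Z ∘L adjoint A)) (DFunLike.congr_fun hR₂)
  rw [← comp_apply, characteristicFunction_comp_defect hDstar hD hDstar_sq hD_sq hR₁,
    comp_apply, comp_apply, map_eq_zero_iff Dstar hDstar_inj, map_eq_zero_iff R hR_inj,
    sub_apply, sub_eq_zero, eq_comm]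

end CharacteristicFunction

theorem sigma_one_char_general
    {H : Type*} [NormedAddCommGroup H] [InnerProductSpace ℂ H] [CompleteSpace H]
    {A₁ A₂ Dstar R : H →L[ℂ] H} {Arow Zrow : WithLp 2 (H × H) →L[ℂ] H}
    {DA : WithLp 2 (H × H) →L[ℂ] WithLp 2 (H × H)} {z₁ z₂ : ℂ}
    (hDstar_pos : 0 ≤ Dstar)
    (hDstar_sq : Dstar * Dstar = 1 - A₁ * adjoint A₁ - A₂ * adjoint A₂)
    (hDstar_inj : Function.Injective Dstar)
    (hArow : ∀ x y : H, Arow (WithLp.toLp 2 (x, y)) = A₁ x + A₂ y)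
    (hDA_pos : 0 ≤ DA) (hDA_sq : DA * DA = 1 - adjoint Arow ∘L Arow)
    (hR₁ : R * (1 - z₁ • adjoint A₁ - z₂ • adjoint A₂) = 1)
    (hR₂ : (1 - z₁ • adjoint A₁ - z₂ • adjoint A₂) * R = 1)
    (hZrow : ∀ x y : H, Zrow (WithLp.toLp 2 (x, y)) = z₁ • x + z₂ • y)
    (x : H) :
    (A₁ x - z₁ • x = 0 ∧ A₂ x - z₂ • x = 0) ↔
      characteristicFunction Arow Zrow Dstar R DA (DA (WithLp.toLp 2 (x, 0))) = 0 ∧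
        characteristicFunction Arow Zrow Dstar R DA (DA (WithLp.toLp 2 (0, x))) = 0 := by
  have hAA : Arow ∘L adjoint Arow = A₁ * adjoint A₁ + A₂ * adjoint A₂ :=
    comp_adjoint_of_row hArow hArow
  have hZA : Zrow ∘L adjoint Arow = z₁ • adjoint A₁ + z₂ • adjoint A₂ :=
    comp_adjoint_of_row (C := z₁ • .id ℂ H) (D := z₂ • .id ℂ H) hZrow hArow
  rw [sub_sub, ← hAA] at hDstar_sq
  rw [sub_sub, ← hZA] at hR₁ hR₂
  simp only [characteristicFunction_defect_apply_eq_zero_iff hDstar_pos hDA_pos hDstar_sq hDA_sq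
    hDstar_inj hR₁ hR₂, hArow, hZrow, map_zero, smul_zero, add_zero, zero_add, sub_eq_zero]

theorem sigma_one_char
    {H : Type*} [NormedAddCommGroup H] [InnerProductSpace ℂ H] [CompleteSpace H]
    (A₁ A₂ : H →L[ℂ] H)
    (hcomm : A₁ * A₂ = A₂ * A₁)
    (hcontr : A₁ * adjoint A₁ + A₂ * adjoint A₂ ≤ 1)
    (hpure : ∀ x : H, Tendsto (fun n => ((A₁ * adjoint A₁ + A₂ * adjoint A₂) ^ n) x) atTop (nhds 0))
    (Dstar : H →L[ℂ] H) (hDstar_pos : 0 ≤ Dstar)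
    (hDstar_sq : Dstar * Dstar = 1 - A₁ * adjoint A₁ - A₂ * adjoint A₂)
    (hDstar_inj : Function.Injective ⇑Dstar)
    (Arow : WithLp 2 (H × H) →L[ℂ] H)
    (hArow : ∀ x y : H, Arow ((WithLp.equiv 2 (H × H)).symm (x, y)) = A₁ x + A₂ y)
    (DA : WithLp 2 (H × H) →L[ℂ] WithLp 2 (H × H)) (hDA_pos : 0 ≤ DA)
    (hDA_sq : DA * DA = 1 - (adjoint Arow) ∘L Arow)
    (z₁ z₂ : ℂ) (hz : ‖z₁‖ ^ 2 + ‖z₂‖ ^ 2 < 1)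
    (R : H →L[ℂ] H) (hR₁ : R * (1 - z₁ • adjoint A₁ - z₂ • adjoint A₂) = 1)
    (hR₂ : (1 - z₁ • adjoint A₁ - z₂ • adjoint A₂) * R = 1)
    (Zrow : WithLp 2 (H × H) →L[ℂ] H)
    (hZrow : ∀ x y : H, Zrow ((WithLp.equiv 2 (H × H)).symm (x, y)) = z₁ • x + z₂ • y) :
    (∃ x : H, x ≠ 0 ∧ A₁ x - z₁ • x = 0 ∧ A₂ x - z₂ • x = 0) ↔
      ∃ x : H, x ≠ 0 ∧ (-Arow + Dstar ∘L R ∘L Zrow ∘L DA) (DA ((WithLp.equiv 2 (H × H)).symm (x, 0))) = 0 ∧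
        (-Arow + Dstar ∘L R ∘L Zrow ∘L DA) (DA ((WithLp.equiv 2 (H × H)).symm (0, x))) = 0 :=
  exists_congr fun x => and_congr_right' <| sigma_one_char_general hDstar_pos hDstar_sq hDstar_inj
    hArow hDA_pos hDA_sq hR₁ hR₂ hZrow x
end

section
/- (Identities (8)–(9) of Proposition 4.1.) Let A = (A₁, A₂) be a commuting 2-contraction on H and λ = (λ₁,λ₂) ∈ 𝔻², λ ≠ 0. Then 1_{H⊕H} − Φ_λ(A)*Φ_λ(A) = D_Λ(1_{H⊕H} − A*Λ)⁻¹(1_{H⊕H} − A*A)(1_{H⊕H} − Λ*A)⁻¹D_Λ, and 1_H − Φ_λ(A)Φ_λ(A)* = D_{Λ*}(1_H − AΛ*)⁻¹(1_H − AA*)(1_H − ΛA*)⁻¹D_{Λ*}. -/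
open ContinuousLinearMap Filter

/-! The defect operators intertwine `L`: `L D_L = D_{L*} L`. Hence the products in `1 - Φ Φ*` for
`Φ = L - D_{L*} V D_L` collapse to `D_{L*} ((1 + V L*) (1 + V L*)* - V V*) D_{L*}`. For
`V = T A` with `T = (1 - A L*)⁻¹` one has `1 + V L* = T`, and the middle factor becomes
`T (1 - A A*) T*`. The identity for `1 - Φ* Φ` is the same one for `A*` and `L*`: the push-through
identity `(1 - A L*)⁻¹ A = A (1 - L* A)⁻¹` says that `Φ*` is obtained from `A*` and `L*` as `Φ` is
from `A` and `L`. -/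

open scoped InnerProduct

section PushThrough

variable {R E F : Type*} [Ring R]
  [AddCommGroup E] [Module R E] [TopologicalSpace E] [IsTopologicalAddGroup E]
  [AddCommGroup F] [Module R F] [TopologicalSpace F] [IsTopologicalAddGroup F]

lemma resolvent_comp_eq_comp_resolvent {A : E →L[R] F} {B : F →L[R] E}
    {T : F →L[R] F} {S : E →L[R] E} (hT : T * (1 - A ∘L B) = 1) (hS : (1 - B ∘L A) * S = 1) :
    T ∘L A = A ∘L S :=
  calc T ∘L A = T ∘L A ∘L ((1 - B ∘L A) * S) := by rw [hS, one_def, comp_id]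
    _ = (T * (1 - A ∘L B)) ∘L A ∘L S := by
      ext x
      simp only [mul_def, comp_apply, sub_apply, one_apply_eq_self, map_sub]
    _ = A ∘L S := by rw [hT, one_def, id_comp]

end PushThrough

lemma star_eq_of_mul_eq_one {M : Type*} [Monoid M] [StarMul M] {a b c : M}
    (hb : b * a = 1) (hc : c * star a = 1) : star b = c :=
  (left_inv_eq_right_inv hc (by rw [← star_mul, hb, star_one])).symm

section Adjoint

variable {𝕜 E F : Type*} [RCLike 𝕜]
  [NormedAddCommGroup E] [InnerProductSpace 𝕜 E] [CompleteSpace E]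
  [NormedAddCommGroup F] [InnerProductSpace 𝕜 F] [CompleteSpace F]

lemma star_one_sub_comp (B : E →L[𝕜] F) (C : F →L[𝕜] E) :
    star (1 - B ∘L C) = 1 - C† ∘L B† := by
  rw [star_sub, star_one, star_eq_adjoint, adjoint_comp]

lemma adjoint_sub_comp_comp_of_isSelfAdjoint {D : E →L[𝕜] E} {D' : F →L[𝕜] F}
    (hD : IsSelfAdjoint D) (hD' : IsSelfAdjoint D') (L V : E →L[𝕜] F) :
    (L - D' ∘L V ∘L D)† = L† - D ∘L V† ∘L D' := by
  rw [map_sub, adjoint_comp, adjoint_comp, hD.adjoint_eq, hD'.adjoint_eq, comp_assoc]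

end Adjoint

section Intertwining

variable {E H : Type*} [NormedAddCommGroup E] [InnerProductSpace ℂ E] [CompleteSpace E]
  [NormedAddCommGroup H] [InnerProductSpace ℂ H] [CompleteSpace H]
  {D : E →L[ℂ] E} {D' : H →L[ℂ] H}

/-- Since `X* X D = -X* D' X` is self-adjoint, `X* X` commutes with `D`. So `X* X D` is a product of
commuting positive operators and is also `≤ 0`. -/
lemma comp_eq_zero_of_comp_eq_neg_comp_s11 (hD : 0 ≤ D) (hD' : 0 ≤ D') {X : E →L[ℂ] H}
    (hX : D' ∘L X = -(X ∘L D)) : X ∘L D = 0 := by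
  have hXX : 0 ≤ X† ∘L X := (nonneg_iff_isPositive _).2 (isPositive_adjoint_comp_self X)
  have h_neg : 0 ≤ -((X† ∘L X) * D) := by
    have h := ((nonneg_iff_isPositive D').1 hD').adjoint_conj X
    rwa [hX, comp_neg, ← comp_assoc, ← nonneg_iff_isPositive] at h
  have h_comm : Commute (X† ∘L X) D :=
    (hXX.isSelfAdjoint.commute_iff hD.isSelfAdjoint).2 (by simpa using h_neg.isSelfAdjoint.neg)
  have h_zero : X† ∘L X ∘L D = 0 :=
    le_antisymm (neg_nonneg.1 h_neg) (h_comm.mul_nonneg hXX hD)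
  rw [← adjoint_comp_self_eq_zero_iff, adjoint_comp, comp_assoc, h_zero, comp_zero]

/-- The difference `X = L D - D' L` satisfies `D' X = -X D`. By positivity both sides vanish,
whence `X X* X = 0`. -/
lemma comp_eq_comp_of_comp_mul_self_eq_s11 (hD : 0 ≤ D) (hD' : 0 ≤ D') {L : E →L[ℂ] H}
    (hL : L ∘L (D * D) = (D' * D') ∘L L) : L ∘L D = D' ∘L L := by
  obtain ⟨X, hX⟩ : ∃ X, X = L ∘L D - D' ∘L L := ⟨_, rfl⟩
  have h_anti : D' ∘L X = -(X ∘L D) := by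
    rw [hX, comp_sub, sub_comp, comp_assoc, ← mul_def D, hL, mul_def, comp_assoc, comp_assoc,
      neg_sub]
  have h_right : X ∘L D = 0 := comp_eq_zero_of_comp_eq_neg_comp_s11 hD hD' h_anti
  have h_left : D' ∘L X = 0 := by rw [h_anti, h_right, neg_zero]
  have h_adj : X† = D ∘L L† - L† ∘L D' := by
    rw [hX, map_sub, adjoint_comp, adjoint_comp, hD.isSelfAdjoint.adjoint_eq,
      hD'.isSelfAdjoint.adjoint_eq]
  have h_cube : X ∘L X† ∘L X = 0 :=
    calc X ∘L X† ∘L X = (X ∘L D) ∘L L† ∘L X - X ∘L L† ∘L (D' ∘L X) := by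
          simp only [h_adj, sub_comp, comp_sub, comp_assoc]
      _ = 0 := by simp only [h_right, h_left, zero_comp, comp_zero, sub_zero]
  have h_sq : X† ∘L X = 0 := by
    rw [← adjoint_comp_self_eq_zero_iff, adjoint_comp, adjoint_adjoint, comp_assoc, h_cube,
      comp_zero]
  exact sub_eq_zero.1 (hX ▸ adjoint_comp_self_eq_zero_iff.1 h_sq)

end Intertwining

/-- `D` is the defect operator `D_L = (1 - L* L)^{1/2}` of `L`, encoded as a positive square root
of `1 - L* L`. The existence of such a `D` makes `L` a contraction, and `D` is then unique. -/
structure IsDefectOperator_s11 {𝕜 E F : Type*} [RCLike 𝕜]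
    [NormedAddCommGroup E] [InnerProductSpace 𝕜 E] [CompleteSpace E]
    [NormedAddCommGroup F] [InnerProductSpace 𝕜 F] [CompleteSpace F]
    (L : E →L[𝕜] F) (D : E →L[𝕜] E) : Prop where
  nonneg : 0 ≤ D
  mul_self : D * D = 1 - L† ∘L L

section Row

variable {𝕜 H : Type*} [RCLike 𝕜]
  [NormedAddCommGroup H] [InnerProductSpace 𝕜 H] [CompleteSpace H]
  {L : WithLp 2 (H × H) →L[𝕜] H} {a b : 𝕜}

lemma adjoint_apply_of_scalar_row (hL : ∀ x y : H, L (WithLp.toLp 2 (x, y)) = a • x + b • y)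
    (h : H) : (L†) h = WithLp.toLp 2 (starRingEnd 𝕜 a • h, starRingEnd 𝕜 b • h) := by
  refine ext_inner_right 𝕜 fun v => ?_
  obtain ⟨⟨x, y⟩, rfl⟩ := (WithLp.toLp_surjective 2) v
  rw [adjoint_inner_left, hL]
  simp [WithLp.prod_inner_apply, inner_add_right, inner_smul_left, inner_smul_right]

lemma comp_adjoint_of_scalar_row (hL : ∀ x y : H, L (WithLp.toLp 2 (x, y)) = a • x + b • y) :
    L ∘L L† = ((‖a‖ ^ 2 + ‖b‖ ^ 2 : ℝ) : 𝕜) • (1 : H →L[𝕜] H) := by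
  ext h
  rw [comp_apply, adjoint_apply_of_scalar_row hL, hL, smul_smul, smul_smul, ← add_smul,
    RCLike.mul_conj, RCLike.mul_conj]
  simp

lemma isDefectOperator_adjoint_of_scalar_row
    (hL : ∀ x y : H, L (WithLp.toLp 2 (x, y)) = a • x + b • y) (hab : ‖a‖ ^ 2 + ‖b‖ ^ 2 ≤ 1) :
    IsDefectOperator_s11 (L†) ((√(1 - ‖a‖ ^ 2 - ‖b‖ ^ 2) : 𝕜) • (1 : H →L[𝕜] H)) where
  nonneg := (nonneg_iff_isPositive _).2 <|
    isPositive_one.smul_of_nonneg (RCLike.ofReal_nonneg.2 (Real.sqrt_nonneg _))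
  mul_self := by
    rw [adjoint_adjoint, comp_adjoint_of_scalar_row hL, smul_mul_smul_comm, one_mul,
      ← RCLike.ofReal_mul, Real.mul_self_sqrt (by linarith), sub_sub, RCLike.ofReal_sub, sub_smul,
      RCLike.ofReal_one, one_smul]

end Row

section Defect

variable {E H : Type*} [NormedAddCommGroup E] [InnerProductSpace ℂ E] [CompleteSpace E]
  [NormedAddCommGroup H] [InnerProductSpace ℂ H] [CompleteSpace H]
  {A L Φ : E →L[ℂ] H} {D S₁ S₂ : E →L[ℂ] E} {D' T T₁ T₂ : H →L[ℂ] H}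

namespace IsDefectOperator_s11

lemma comp_eq_comp_s11 (hD : IsDefectOperator_s11 L D) (hD' : IsDefectOperator_s11 (L†) D') :
    L ∘L D = D' ∘L L := by
  refine comp_eq_comp_of_comp_mul_self_eq_s11 hD.nonneg hD'.nonneg ?_
  rw [hD.mul_self, hD'.mul_self, adjoint_adjoint, comp_sub, sub_comp, comp_assoc, one_def, one_def,
    comp_id, id_comp]

lemma one_sub_comp_adjoint (hD : IsDefectOperator_s11 L D) (hD' : IsDefectOperator_s11 (L†) D')
    (V : E →L[ℂ] H) :
    1 - (L - D' ∘L V ∘L D) ∘L (L - D' ∘L V ∘L D)† =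
      D' * ((1 + V ∘L L†) * (1 + V ∘L L†)† - V ∘L V†) * D' := by
  have h_adj := adjoint_sub_comp_comp_of_isSelfAdjoint hD.nonneg.isSelfAdjoint
    hD'.nonneg.isSelfAdjoint L V
  have h_sq (x : E) : D (D x) = x - (L†) (L x) := DFunLike.congr_fun hD.mul_self x
  have h_sq' (y : H) : L ((L†) y) = y - D' (D' y) := by
    have h := DFunLike.congr_fun hD'.mul_self y
    simp only [adjoint_adjoint, mul_def, comp_apply, sub_apply, one_apply_eq_self] at h
    rw [h, sub_sub_cancel]
  have h_comm (x : E) : L (D x) = D' (L x) := DFunLike.congr_fun (hD.comp_eq_comp_s11 hD') x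
  have h_comm' (y : H) : D ((L†) y) = (L†) (D' y) :=
    (DFunLike.congr_fun (hD'.comp_eq_comp_s11 (by rwa [adjoint_adjoint])) y).symm
  ext y
  simp only [h_adj, map_add, adjoint_one, adjoint_comp, adjoint_adjoint, mul_def, comp_apply,
    sub_apply, add_apply, one_apply_eq_self, map_sub, h_sq, h_sq', h_comm, h_comm']
  abel

lemma one_sub_comp_adjoint_of_mul_eq_one (hD : IsDefectOperator_s11 L D)
    (hD' : IsDefectOperator_s11 (L†) D') (hT : T * (1 - A ∘L L†) = 1)
    (hΦ : Φ = L - D' ∘L T ∘L A ∘L D) :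
    1 - Φ ∘L Φ† = D' * T * (1 - A ∘L A†) * T† * D' := by
  have h_resolvent : 1 + (T ∘L A) ∘L L† = T := by
    rw [mul_sub, mul_one, sub_eq_iff_eq_add'] at hT
    rw [comp_assoc, add_comm, ← mul_def, ← hT]
  calc 1 - Φ ∘L Φ† = D' * (T * T† - (T ∘L A) ∘L (T ∘L A)†) * D' := by
        rw [hΦ, ← comp_assoc T, hD.one_sub_comp_adjoint hD', h_resolvent]
    _ = D' * T * (1 - A ∘L A†) * T† * D' := by
        simp only [adjoint_comp, mul_def, comp_sub, sub_comp, comp_assoc, one_def, id_comp]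

end IsDefectOperator_s11

theorem defect_identities_general
    (hD : IsDefectOperator_s11 L D) (hD' : IsDefectOperator_s11 (L†) D')
    (hT₁ : T₁ * (1 - A ∘L L†) = 1) (hT₂ : T₂ * (1 - L ∘L A†) = 1)
    (hS₁ : S₁ * (1 - A† ∘L L) = 1) (hS₂ : S₂ * (1 - L† ∘L A) = 1)
    (hΦ : Φ = L - D' ∘L T₁ ∘L A ∘L D) :
    1 - Φ† ∘L Φ = D * S₁ * (1 - A† ∘L A) * S₂ * D ∧
      1 - Φ ∘L Φ† = D' * T₁ * (1 - A ∘L A†) * T₂ * D' := by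
  have hT : T₁† = T₂ :=
    star_eq_of_mul_eq_one hT₁ (by rwa [star_one_sub_comp, adjoint_adjoint])
  have hS : S₁† = S₂ :=
    star_eq_of_mul_eq_one hS₁ (by rwa [star_one_sub_comp, adjoint_adjoint])
  have hT₂' : (1 - L ∘L A†) * T₂ = 1 := by
    have h := congrArg star hT₁
    rwa [star_mul, star_one, star_one_sub_comp, adjoint_adjoint, star_eq_adjoint, hT] at h
  have hΦ' : Φ† = L† - D ∘L S₁ ∘L A† ∘L D' := by
    rw [hΦ, ← comp_assoc T₁, adjoint_sub_comp_comp_of_isSelfAdjoint hD.nonneg.isSelfAdjoint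
      hD'.nonneg.isSelfAdjoint, adjoint_comp, hT, ← resolvent_comp_eq_comp_resolvent hS₁ hT₂',
      comp_assoc]
  constructor
  · have h := hD'.one_sub_comp_adjoint_of_mul_eq_one (A := (A†)) (by rwa [adjoint_adjoint])
      (by rwa [adjoint_adjoint]) hΦ'
    rwa [adjoint_adjoint, adjoint_adjoint, hS] at h
  · rw [hD.one_sub_comp_adjoint_of_mul_eq_one hD' hT₁ hΦ, hT]

end Defect

theorem defect_identities
    {H : Type*} [NormedAddCommGroup H] [InnerProductSpace ℂ H] [CompleteSpace H]
    (A₁ A₂ : H →L[ℂ] H)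
    (hcomm : A₁ * A₂ = A₂ * A₁)
    (hcontr : A₁ * adjoint A₁ + A₂ * adjoint A₂ ≤ 1)
    (Arow : WithLp 2 (H × H) →L[ℂ] H)
    (hArow : ∀ x y : H, Arow ((WithLp.equiv 2 (H × H)).symm (x, y)) = A₁ x + A₂ y)
    (μ₁ μ₂ : ℂ) (hμ : ‖μ₁‖ ^ 2 + ‖μ₂‖ ^ 2 < 1) (hμ0 : (μ₁, μ₂) ≠ ((0 : ℂ), (0 : ℂ)))
    (s : ℝ) (hs : s = Real.sqrt (1 - ‖μ₁‖ ^ 2 - ‖μ₂‖ ^ 2))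
    (Lrow : WithLp 2 (H × H) →L[ℂ] H)
    (hLrow : ∀ x y : H, Lrow ((WithLp.equiv 2 (H × H)).symm (x, y)) = μ₁ • x + μ₂ • y)
    (DL : WithLp 2 (H × H) →L[ℂ] WithLp 2 (H × H)) (hDL_pos : 0 ≤ DL)
    (hDL_sq : DL * DL = 1 - (adjoint Lrow) ∘L Lrow)
    (T₁ : H →L[ℂ] H) (hT₁ : T₁ * (1 - Arow ∘L adjoint Lrow) = 1)
    (hT₁' : (1 - Arow ∘L adjoint Lrow) * T₁ = 1)
    (T₂ : H →L[ℂ] H) (hT₂ : T₂ * (1 - Lrow ∘L adjoint Arow) = 1)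
    (hT₂' : (1 - Lrow ∘L adjoint Arow) * T₂ = 1)
    (S₁ : WithLp 2 (H × H) →L[ℂ] WithLp 2 (H × H))
    (hS₁ : S₁ * (1 - (adjoint Arow) ∘L Lrow) = 1) (hS₁' : (1 - (adjoint Arow) ∘L Lrow) * S₁ = 1)
    (S₂ : WithLp 2 (H × H) →L[ℂ] WithLp 2 (H × H))
    (hS₂ : S₂ * (1 - (adjoint Lrow) ∘L Arow) = 1) (hS₂' : (1 - (adjoint Lrow) ∘L Arow) * S₂ = 1)
    (Phi : WithLp 2 (H × H) →L[ℂ] H)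
    (hPhi : Phi = (Lrow - (s : ℂ) • (T₁ ∘L Arow ∘L DL))) :
    1 - (adjoint Phi) ∘L Phi = DL * S₁ * (1 - (adjoint Arow) ∘L Arow) * S₂ * DL ∧
      1 - Phi ∘L (adjoint Phi) =
        ((s : ℂ) • (1 : H →L[ℂ] H)) * T₁ * (1 - Arow ∘L adjoint Arow) * T₂ *
          ((s : ℂ) • (1 : H →L[ℂ] H)) := by
  subst hs
  exact defect_identities_general ⟨hDL_pos, hDL_sq⟩
    (isDefectOperator_adjoint_of_scalar_row hLrow hμ.le) hT₁ hT₂ hS₁ hS₂ hPhi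
end
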